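/- arXiv:2111.09923 — 2 statements merged into one kernel-verified Lean document; each statement's English description precedes it below -/
import Mathlib

section
/- Let p ≥ 3 be a prime, δ ∈ (0,1] and ε > 0. There exist constants c, C > 0 depending only on p, δ and ε such that: for every real-split central division ℚ-algebra A of degree p, every order 𝒪 ⊆ A with discriminant D = disc(𝒪), every z ∈ GL_p(ℝ), and every positive integer m with m ≤ c·D^{1/(4p(p-1)) − ε}, the set 𝒪(m; z, δ) is finite with #𝒪(m; z, δ) ≤ C·m^ε. -/
open Matrix

/-- `IsSO k` : `k ∈ SO(n)`. -/
def IsSO {n : ℕ} (k : Matrix (Fin n) (Fin n) ℝ) : Prop :=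
  kᵀ * k = 1 ∧ k.det = 1

/-- An order in a `ℚ`-algebra: a subring which is finitely generated as a `ℤ`-module and
contains a `ℚ`-basis of the algebra. -/
def IsOrder (A : Type*) [Ring A] [Algebra ℚ A] (O : Subring A) : Prop :=
  O.toAddSubgroup.FG ∧ Submodule.span ℚ (O : Set A) = ⊤

/-- The set `𝒪(m; z, δ)`. -/
noncomputable def OSet {n : ℕ} {A : Type*} [DivisionRing A] [CharZero A]
    (ι : A →ₐ[ℚ] Matrix (Fin n) (Fin n) ℝ) (O : Subring A)
    (z : Matrix.GeneralLinearGroup (Fin n) ℝ) (m : ℕ) (δ : ℝ) : Set A :=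
  {γ | γ ∈ O ∧ (ι γ).det = (m : ℝ) ∧
    ∃ k : Matrix (Fin n) (Fin n) ℝ, IsSO k ∧
      ∀ i j, |(((m : ℝ) ^ (-(1 : ℝ) / (n : ℝ))) •
        ((↑z⁻¹ : Matrix (Fin n) (Fin n) ℝ) * ι γ * (↑z : Matrix (Fin n) (Fin n) ℝ)) - k) i j| < δ}

/-- `D` is the discriminant of the order `𝒪`. -/
def IsDisc {n : ℕ} {A : Type*} [DivisionRing A] [CharZero A]
    (ι : A →ₐ[ℚ] Matrix (Fin n) (Fin n) ℝ) (O : Subring A) (D : ℕ) : Prop :=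
  Ideal.span {d : ℤ | ∃ x : Fin (n ^ 2) → A, (∀ i, x i ∈ O) ∧
      (d : ℝ) = (Matrix.of fun i j => (ι (x i * x j)).trace).det} = Ideal.span {(D : ℤ)}

/-!
If two elements `α`, `β` of `𝒪(m; z, δ)` do not commute, then `ℚ(α)` has degree `p` and each step
`ℚ(α) · span {1, α, β} ^ j` gains at least `p` dimensions until it fills `A`, so that `A` is spanned
by words of length `2 (p - 1)` in `1, α, β`. After conjugation by `z` these words have entries
`≪ m ^ (2 (p - 1) / p)`; the Gram determinant of `p ^ 2` of them for the reduced trace is a nonzero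
multiple of `D`, and expanding it gives `D ≪ m ^ (4 p (p - 1))`.

For smaller `m` the elements of `𝒪(m; z, δ)` hence commute and lie in a number field `K ⊆ A` of
bounded degree. Each of them generates an ideal of `𝓞 K` dividing `(m ^ p)`, and there are
`≪ m ^ ε` such ideals. If `g` and `g u` generate the same ideal, with `u ≠ 1` a unit, then
`|nr (g - g u)| = m |nr (1 - u)| ≥ m`, so that they cannot both lie in a small cube of `M_p(ℝ)`, and
boundedly many such cubes cover the region of matrices under consideration.
-/

section CentralDivisionAlgebra

open scoped TensorProduct

variable {k L A B : Type*} [Field k] [Field L] [Algebra k L]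
  [DivisionRing A] [Algebra k A] [Algebra.IsCentral k A]
  [Ring B] [Algebra k B] [Algebra L B] [IsScalarTower k L B]

lemma eq_algebraMap_of_forall_commute {y : A} (hy : ∀ a, a * y = y * a) :
    ∃ q : k, y = algebraMap k A q := by
  have hmem : y ∈ Subalgebra.center k A := Subalgebra.mem_center_iff.2 hy
  rw [Algebra.IsCentral.center_eq_bot] at hmem
  obtain ⟨q, hq⟩ := Algebra.mem_bot.1 hmem
  exact ⟨q, hq.symm⟩

-- A shortest nontrivial relation, normalised to contain the coefficient `1`, becomes shorter after
-- commuting with any `a`; so its coefficients are central, contradicting the independence of `c`.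
lemma eq_zero_of_sum_smul_map_eq_zero [Nontrivial B] {κ : Type*} {c : κ → L}
    (hc : LinearIndependent k c) (f : A →ₐ[k] B) (s : Finset κ) (x : κ → A)
    (hx : ∑ i ∈ s, c i • f (x i) = 0) : ∀ i ∈ s, x i = 0 := by
  classical
  induction s using Finset.strongInduction generalizing x with
  | H s ih =>
    by_contra! ⟨i₀, hi₀, hx₀⟩
    let y i := x i * (x i₀)⁻¹
    have hy : ∑ i ∈ s, c i • f (y i) = 0 := by
      simpa [y, Finset.sum_mul] using congrArg (· * f (x i₀)⁻¹) hx
    have hy_comm (a : A) : ∀ i ∈ s, a * y i = y i * a := by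
      have hcomm : ∑ i ∈ s, c i • f (a * y i - y i * a) = 0 := by
        simpa [smul_sub, Finset.sum_sub_distrib, Finset.mul_sum, Finset.sum_mul]
          using congrArg (fun b => f a * b - b * f a) hy
      rw [← Finset.add_sum_erase s _ hi₀, show a * y i₀ - y i₀ * a = 0 by simp [y, hx₀], map_zero,
        smul_zero, zero_add] at hcomm
      intro i hi
      obtain rfl | hne := eq_or_ne i i₀
      · simp [y, hx₀]
      · exact sub_eq_zero.1 <|
          ih _ (Finset.erase_ssubset hi₀) _ hcomm i (Finset.mem_erase.2 ⟨hne, hi⟩)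
    choose! q hq using fun i hi => eq_algebraMap_of_forall_commute (k := k) (hy_comm · i hi)
    have hrel : ∑ i ∈ s, q i • c i = 0 := by
      refine (algebraMap L B).injective ?_
      rw [map_zero, ← hy, map_sum]
      refine Finset.sum_congr rfl fun i hi => ?_
      rw [hq i hi, AlgHom.commutes, Algebra.smul_def, mul_comm, map_mul, ← Algebra.smul_def,
        ← IsScalarTower.algebraMap_apply]
    have hq₀ : q i₀ = 0 := linearIndependent_iff'.1 hc s q hrel i₀ hi₀
    have hone := hq i₀ hi₀
    simp [y, hx₀, hq₀] at hone

/-- The extension of scalars `L ⊗ A → B` of an embedding `f` of `A` into an `L`-algebra `B`. -/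
noncomputable def scalarExtension (f : A →ₐ[k] B) : L ⊗[k] A →ₐ[L] B :=
  Algebra.TensorProduct.lift (Algebra.ofId L B) f fun l a => Algebra.commute_algebraMap_left l (f a)

omit [Algebra.IsCentral k A] in
lemma scalarExtension_tmul (f : A →ₐ[k] B) (l : L) (a : A) :
    scalarExtension f (l ⊗ₜ[k] a) = l • f a :=
  (Algebra.TensorProduct.lift_tmul _ _ _ l a).trans (Algebra.smul_def l (f a)).symm

lemma scalarExtension_injective [Nontrivial B] (f : A →ₐ[k] B) :
    Function.Injective (scalarExtension (L := L) f) := by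
  rw [injective_iff_map_eq_zero]
  intro t ht
  let c := Module.Basis.ofVectorSpace k L
  obtain ⟨x, rfl⟩ := TensorProduct.eq_repr_basis_left c t
  rw [Finsupp.sum, map_sum] at ht
  simp only [scalarExtension_tmul] at ht
  have hx := eq_zero_of_sum_smul_map_eq_zero c.linearIndependent f x.support x ht
  exact Finset.sum_eq_zero fun i hi => by simp only [hx i hi, TensorProduct.tmul_zero]

variable {n : Type*} [Fintype n]

omit [Algebra.IsCentral k A] in
lemma finiteDimensional_of_finrank_eq_card_sq [Nonempty n]
    (hA : Module.finrank k A = Fintype.card n ^ 2) : FiniteDimensional k A :=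
  Module.finite_of_finrank_pos (hA ▸ pow_pos Fintype.card_pos 2)

variable [DecidableEq n]

/-- The isomorphism `L ⊗ A ≃ Mₙ(L)` induced by an embedding of a central division `k`-algebra `A`
of dimension `n²` into `Mₙ(L)`: such an embedding exhibits `L` as a splitting field of `A`. -/
noncomputable def splittingEquiv [Nonempty n] (f : A →ₐ[k] Matrix n n L)
    (hA : Module.finrank k A = Fintype.card n ^ 2) : L ⊗[k] A ≃ₐ[L] Matrix n n L :=
  have := finiteDimensional_of_finrank_eq_card_sq hA
  AlgEquiv.ofBijective (scalarExtension f) ⟨scalarExtension_injective f,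
    (LinearMap.injective_iff_surjective_of_finrank_eq_finrank
      (f := (scalarExtension f : L ⊗[k] A →ₐ[L] Matrix n n L).toLinearMap) (by
        rw [Module.finrank_baseChange, hA, Module.finrank_matrix, Module.finrank_self, mul_one,
          sq])).1 (scalarExtension_injective f)⟩

lemma leftMulMatrix_stdBasis {R : Type*} [CommRing R] (M : Matrix n n R) :
    Algebra.leftMulMatrix (Matrix.stdBasis R n n) M =
      kroneckerMap (· * ·) M (1 : Matrix n n R) := by
  have hrepr (N : Matrix n n R) (i j : n) : (Matrix.stdBasis R n n).repr N (i, j) = N i j := by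
    simp [Matrix.stdBasis, Pi.basis_repr]
  ext ⟨i, j⟩ ⟨a, b⟩
  rw [Algebra.leftMulMatrix_eq_repr_mul, Matrix.stdBasis_eq_single, hrepr]
  obtain rfl | hne := eq_or_ne b j
  · simp [Matrix.mul_apply, Matrix.single_apply]
  · simp [Matrix.mul_apply, hne, hne.symm]

lemma norm_matrix_eq_det_pow {R : Type*} [CommRing R] (M : Matrix n n R) :
    Algebra.norm R M = M.det ^ Fintype.card n := by
  rw [Algebra.norm_eq_matrix_det (Matrix.stdBasis R n n), leftMulMatrix_stdBasis, det_kronecker,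
    det_one, one_pow, mul_one]

lemma trace_lmul_matrix {R : Type*} [CommRing R] (M : Matrix n n R) :
    LinearMap.trace R _ (Algebra.lmul R (Matrix n n R) M) = Fintype.card n * M.trace := by
  rw [LinearMap.trace_eq_matrix_trace R (Matrix.stdBasis R n n), ← Algebra.leftMulMatrix_apply,
    leftMulMatrix_stdBasis, trace_kronecker, trace_one, mul_comm]

variable [Nonempty n] (f : A →ₐ[k] Matrix n n L) (hA : Module.finrank k A = Fintype.card n ^ 2)

lemma splittingEquiv_tmul (l : L) (a : A) : splittingEquiv f hA (l ⊗ₜ a) = l • f a :=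
  scalarExtension_tmul f l a

include hA

lemma conj_baseChange_mulLeft (a : A) :
    (splittingEquiv f hA).toLinearEquiv.conj ((LinearMap.mulLeft k a).baseChange L) =
      LinearMap.mulLeft L (f a) := by
  refine LinearMap.ext fun M => ?_
  obtain ⟨t, rfl⟩ := (splittingEquiv f hA).surjective M
  rw [LinearEquiv.conj_apply_apply, AlgEquiv.coe_toLinearEquiv,
    AlgEquiv.coe_symm_toLinearEquiv, AlgEquiv.symm_apply_apply]
  induction t with
  | zero => simp
  | add t u ht hu => rw [map_add, map_add, ht, hu, map_add, map_add]
  | tmul l b => simp [splittingEquiv_tmul]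

lemma algebraMap_norm_eq_det_pow (a : A) :
    algebraMap k L (Algebra.norm k a) = (f a).det ^ Fintype.card n := by
  have := finiteDimensional_of_finrank_eq_card_sq hA
  calc algebraMap k L (Algebra.norm k a)
      = LinearMap.det ((LinearMap.mulLeft k a).baseChange L) := (LinearMap.det_baseChange _).symm
    _ = LinearMap.det (LinearMap.mulLeft L (f a)) := by
        rw [← conj_baseChange_mulLeft f hA]
        exact (LinearMap.det_conj _ (splittingEquiv f hA).toLinearEquiv).symm
    _ = (f a).det ^ Fintype.card n := norm_matrix_eq_det_pow (f a)

lemma algebraMap_trace_lmul_eq (a : A) :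
    algebraMap k L (LinearMap.trace k A (Algebra.lmul k A a)) = Fintype.card n * (f a).trace := by
  have := finiteDimensional_of_finrank_eq_card_sq hA
  calc algebraMap k L (LinearMap.trace k A (Algebra.lmul k A a))
      = LinearMap.trace L _ ((LinearMap.mulLeft k a).baseChange L) :=
        (LinearMap.trace_baseChange _ L).symm
    _ = LinearMap.trace L _ (LinearMap.mulLeft L (f a)) := by
        rw [← conj_baseChange_mulLeft f hA, LinearMap.trace_conj']
    _ = Fintype.card n * (f a).trace := trace_lmul_matrix (f a)

end CentralDivisionAlgebra

section TraceGram

variable {k L A n κ : Type*} [Field k] [Field L] [Algebra k L] [Fintype n] [DecidableEq n]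

/-- The Gram matrix of a family `x` under the reduced trace form of an algebra embedded in `Mₙ(L)`.
-/
def traceGram [Ring A] [Algebra k A] (f : A →ₐ[k] Matrix n n L) (x : κ → A) : Matrix κ κ L :=
  of fun i j => (f (x i * x j)).trace

lemma det_traceGram_basis_ne_zero [DivisionRing A] [Algebra k A] [Algebra.IsCentral k A]
    [Nonempty n] [Fintype κ] [DecidableEq κ] (f : A →ₐ[k] Matrix n n L)
    (hA : Module.finrank k A = Fintype.card n ^ 2) (b : Module.Basis κ k A) :
    (traceGram f b).det ≠ 0 := by
  let b' := (Algebra.TensorProduct.basis L b).map (splittingEquiv f hA).toLinearEquiv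
  have hb' (i : κ) : b' i = f (b i) := by simp [b', splittingEquiv_tmul]
  rw [Ne, ← exists_vecMul_eq_zero_iff]
  rintro ⟨v, hv, hvG⟩
  let M := ∑ i, v i • b' i
  have hMb (j : κ) : (M * b' j).trace = 0 := by
    have hj := congrFun hvG j
    simpa [M, hb', vecMul, dotProduct, traceGram, Finset.sum_mul, trace_sum] using hj
  have hM : M = 0 := by
    refine ext_iff_trace_mul_right.2 fun N => ?_
    rw [← b'.sum_repr N, Finset.mul_sum, trace_sum, zero_mul, trace_zero]
    exact Finset.sum_eq_zero fun j _ => by rw [mul_smul_comm, trace_smul, hMb, smul_zero]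
  exact hv (funext (Fintype.linearIndependent_iff.1 b'.linearIndependent v hM))

end TraceGram

section Integrality

open Polynomial in
lemma isIntegral_of_mem_spectrum {R K B : Type*} [CommRing R] [Field K] [Algebra R K] [Ring B]
    [Algebra R B] [Algebra K B] [IsScalarTower R K B] {b : B} (hb : IsIntegral R b) {μ : K}
    (hμ : μ ∈ spectrum K b) : IsIntegral R μ := by
  obtain ⟨q, hq, hqb⟩ := hb
  have : Nontrivial B := by
    by_contra! _
    rwa [spectrum.of_subsingleton] at hμ
  have hzero : aeval b (q.map (algebraMap R K)) = 0 := by rwa [aeval_map_algebraMap]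
  have hmem := spectrum.subset_polynomial_aeval b (q.map (algebraMap R K)) ⟨μ, hμ, rfl⟩
  rw [hzero, spectrum.zero_eq, Set.mem_singleton_iff] at hmem
  exact ⟨q, hq, by simpa [eval_map] using hmem⟩

lemma isIntegral_trace {R K n : Type*} [CommRing R] [Field K] [Algebra R K] [Fintype n]
    [DecidableEq n] {M : Matrix n n K} (hM : IsIntegral R M) : IsIntegral R M.trace := by
  let F := AlgebraicClosure K
  let φ : Matrix n n K →ₐ[R] Matrix n n F := (IsScalarTower.toAlgHom R K F).mapMatrix
  have htrace : algebraMap K F M.trace = (φ M).trace := AddMonoidHom.map_trace (algebraMap K F) M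
  rw [← isIntegral_algebraMap_iff (algebraMap K F).injective, htrace, trace_eq_sum_roots_charpoly]
  refine IsIntegral.multiset_sum fun μ hμ => isIntegral_of_mem_spectrum (hM.map φ) ?_
  exact mem_spectrum_iff_isRoot_charpoly.2 (Polynomial.isRoot_of_mem_roots hμ)

end Integrality

section Order

lemma isIntegral_of_mem_order {A : Type*} [Ring A] [Algebra ℚ A] {O : Subring A}
    (hO : IsOrder A O) {x : A} (hx : x ∈ O) : IsIntegral ℤ x :=
  IsIntegral.of_mem_of_fg (subalgebraOfSubring O)
    ((Submodule.fg_iff_addSubgroup_fg _).2 hO.1) x hx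

lemma exists_basis_mem_of_span_eq_top {K V : Type*} [DivisionRing K] [AddCommGroup V] [Module K V]
    [FiniteDimensional K V] {s : Set V} (hs : Submodule.span K s = ⊤) {N : ℕ}
    (hN : Module.finrank K V = N) : ∃ b : Module.Basis (Fin N) K V, ∀ i, b i ∈ s := by
  let b := Module.Basis.ofSpan hs.ge
  have := Module.Finite.finite_basis b
  refine ⟨b.reindex (Finite.equivFinOfCardEq ?_), fun i => ?_⟩
  · rw [← Module.finrank_eq_nat_card_basis b, hN]
  · rw [Module.Basis.reindex_apply]
    exact Module.Basis.ofSpan_subset hs.ge ⟨_, rfl⟩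

variable {n : ℕ} {A : Type*} [DivisionRing A] [CharZero A]
  {ι : A →ₐ[ℚ] Matrix (Fin n) (Fin n) ℝ} {O : Subring A} {D : ℕ}

lemma IsDisc.dvd_of_intCast_eq_det (hD : IsDisc ι O D) {x : Fin (n ^ 2) → A} (hx : ∀ i, x i ∈ O)
    {d : ℤ} (hd : (d : ℝ) = (traceGram ι x).det) : (D : ℤ) ∣ d := by
  rw [← Ideal.mem_span_singleton, ← hD]
  exact Ideal.subset_span ⟨x, hx, hd⟩

variable [NeZero n] [Algebra.IsCentral ℚ A]

lemma exists_intCast_eq_trace (hA : Module.finrank ℚ A = n ^ 2) (hO : IsOrder A O) {x : A}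
    (hx : x ∈ O) : ∃ t : ℤ, (t : ℝ) = (ι x).trace := by
  obtain ⟨q, hq⟩ : ∃ q : ℚ, (q : ℝ) = (ι x).trace := by
    have htrace := algebraMap_trace_lmul_eq ι (by rwa [Fintype.card_fin]) x
    rw [Fintype.card_fin] at htrace
    refine ⟨LinearMap.trace ℚ A (Algebra.lmul ℚ A x) / n, ?_⟩
    rw [Rat.cast_div, Rat.cast_natCast, div_eq_iff (NeZero.ne _), mul_comm]
    exact htrace
  have hint : IsIntegral ℤ (algebraMap ℚ ℝ q) := by
    rw [eq_ratCast, hq]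
    exact isIntegral_trace ((isIntegral_of_mem_order hO hx).map (ι.restrictScalars ℤ))
  obtain ⟨t, rfl⟩ := IsIntegrallyClosed.isIntegral_iff.1
    ((isIntegral_algebraMap_iff (algebraMap ℚ ℝ).injective).1 hint)
  exact ⟨t, by simpa using hq⟩

lemma exists_intCast_eq_det_traceGram (hA : Module.finrank ℚ A = n ^ 2) (hO : IsOrder A O)
    {κ : Type*} [Fintype κ] [DecidableEq κ] {x : κ → A} (hx : ∀ i, x i ∈ O) :
    ∃ d : ℤ, (d : ℝ) = (traceGram ι x).det := by
  choose t ht using fun i j => exists_intCast_eq_trace (ι := ι) hA hO (O.mul_mem (hx i) (hx j))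
  refine ⟨(of t).det, ?_⟩
  rw [← eq_intCast (Int.castRingHom ℝ), RingHom.map_det]
  congr 1
  ext i j
  exact ht i j

lemma IsDisc.le_abs_det_traceGram (hD : IsDisc ι O D) (hO : IsOrder A O)
    (b : Module.Basis (Fin (n ^ 2)) ℚ A) (hb : ∀ i, b i ∈ O) :
    (D : ℝ) ≤ |(traceGram ι b).det| := by
  have hA : Module.finrank ℚ A = n ^ 2 := by simp [Module.finrank_eq_card_basis b]
  have hdet := det_traceGram_basis_ne_zero ι (by rwa [Fintype.card_fin]) b
  obtain ⟨d, hd⟩ := exists_intCast_eq_det_traceGram (ι := ι) hA hO hb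
  rw [← hd] at hdet ⊢
  have hle := Int.le_of_dvd (abs_pos.2 (mod_cast hdet))
    ((dvd_abs _ _).2 (hD.dvd_of_intCast_eq_det hb hd))
  exact_mod_cast hle

lemma IsDisc.ne_zero (hD : IsDisc ι O D) (hO : IsOrder A O) (hA : Module.finrank ℚ A = n ^ 2) :
    D ≠ 0 := by
  rintro rfl
  have := finiteDimensional_of_finrank_eq_card_sq (n := Fin n) (by rwa [Fintype.card_fin])
  obtain ⟨b, hb⟩ := exists_basis_mem_of_span_eq_top hO.2 hA
  obtain ⟨d, hd⟩ := exists_intCast_eq_det_traceGram (ι := ι) hA hO hb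
  have hd0 : d = 0 := by simpa using hD.dvd_of_intCast_eq_det hb hd
  refine det_traceGram_basis_ne_zero ι (by rwa [Fintype.card_fin]) b ?_
  rw [← hd, hd0, Int.cast_zero]

end Order

section WordSpan

open Module Submodule

variable {k A : Type*} [Field k]

lemma adjoin_le_of_mul_span_le [Ring A] [Algebra k A] {s : Set A} {W : Submodule k A}
    (hone : 1 ∈ W) (hW : W * span k s ≤ W) : (Algebra.adjoin k s).toSubmodule ≤ W := by
  have hmul : ∀ b ∈ Algebra.adjoin k s, ∀ u ∈ W, u * b ∈ W := by
    intro b hb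
    induction hb using Algebra.adjoin_induction with
    | mem x hx => exact fun u hu => hW (mul_mem_mul hu (subset_span hx))
    | algebraMap r =>
      intro u hu
      rw [← Algebra.commutes, ← Algebra.smul_def]
      exact W.smul_mem r hu
    | add x y _ _ hx hy => exact fun u hu => mul_add u x y ▸ W.add_mem (hx u hu) (hy u hu)
    | mul x y _ _ hx hy => exact fun u hu => mul_assoc u x y ▸ hy _ (hx u hu)
  exact fun b hb => one_mul b ▸ hmul b hb 1 hone

variable [DivisionRing A] [Algebra k A] [FiniteDimensional k A]

lemma finrank_subalgebra_dvd_finrank (B : Subalgebra k A) (U : Submodule k A)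
    (hU : ∀ b ∈ B, ∀ u ∈ U, b * u ∈ U) : finrank k B ∣ finrank k U := by
  let := divisionRingOfFiniteDimensional k B
  let U' : Submodule B A :=
    { U.toAddSubmonoid with smul_mem' := fun b u hu => hU b b.2 u hu }
  exact ⟨finrank B U', (finrank_mul_finrank k B U').symm⟩

lemma succ_mul_finrank_le_or_adjoin_le (E : Subalgebra k A) (s : Set A) (j : ℕ) :
    (j + 1) * finrank k E ≤ finrank k ↥(E.toSubmodule * span k (insert 1 s) ^ j) ∨
      (Algebra.adjoin k s).toSubmodule ≤ E.toSubmodule * span k (insert 1 s) ^ j := by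
  set M := span k (insert 1 s)
  let W : ℕ → Submodule k A := fun j => E.toSubmodule * M ^ j
  have hsucc (j : ℕ) : W (j + 1) = W j * M := by
    simp only [W, pow_succ, mul_assoc]
  have hM : 1 ≤ M := one_le.2 (subset_span (Set.mem_insert 1 s))
  have hmono (j : ℕ) : W j ≤ W (j + 1) := hsucc j ▸ le_mul_of_one_le_right' hM
  have hone (j : ℕ) : 1 ∈ W j :=
    one_le.1 (one_le_mul (one_le.2 E.one_mem) (one_le_pow_of_one_le' hM j))
  have hdvd (j : ℕ) : finrank k E ∣ finrank k (W j) :=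
    finrank_subalgebra_dvd_finrank E _ fun b hb u hu => by
      have hmem := mul_mem_mul (show b ∈ E.toSubmodule from hb) hu
      rwa [← mul_assoc, E.isIdempotentElem_toSubmodule.eq] at hmem
  induction j with
  | zero => exact .inl (by rw [pow_zero, mul_one, zero_add, one_mul]; rfl)
  | succ j ih =>
    rcases ih with hdim | hle
    · obtain heq | hlt := (hmono j).eq_or_lt
      · refine .inr ((adjoin_le_of_mul_span_le (hone j) ?_).trans (hmono j))
        calc W j * span k s ≤ W j * M := mul_le_mul' le_rfl (span_mono (Set.subset_insert 1 s))
          _ = W j := by rw [← hsucc, ← heq]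
      · left
        obtain ⟨a, ha⟩ := hdvd j
        obtain ⟨b, hb⟩ := hdvd (j + 1)
        have hrank := finrank_lt_finrank_of_lt hlt
        rw [ha, mul_comm] at hdim
        rw [ha, hb] at hrank
        have hja := Nat.le_of_mul_le_mul_left hdim finrank_pos
        have hab := Nat.lt_of_mul_lt_mul_left hrank
        rw [hb, mul_comm]
        gcongr
        omega
    · exact .inr (hle.trans (hmono j))

lemma adjoin_le_mul_span_pow {E : Subalgebra k A} {s : Set A} (hE : E ≤ Algebra.adjoin k s) {j : ℕ}
    (hj : finrank k (Algebra.adjoin k s) ≤ (j + 1) * finrank k E) :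
    (Algebra.adjoin k s).toSubmodule ≤ E.toSubmodule * span k (insert 1 s) ^ j := by
  rcases succ_mul_finrank_le_or_adjoin_le E s j with hdim | hle
  · have hM : span k (insert 1 s) ≤ (Algebra.adjoin k s).toSubmodule :=
      span_le.2 (Set.insert_subset (one_mem (Algebra.adjoin k s)) Algebra.subset_adjoin)
    have hle : E.toSubmodule * span k (insert 1 s) ^ j ≤ (Algebra.adjoin k s).toSubmodule := by
      calc E.toSubmodule * span k (insert 1 s) ^ j
          ≤ (Algebra.adjoin k s).toSubmodule * (Algebra.adjoin k s).toSubmodule ^ j :=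
            mul_le_mul' (Subalgebra.toSubmodule.monotone hE) (pow_le_pow_left' hM j)
        _ = (Algebra.adjoin k s).toSubmodule := by
            rw [← pow_succ', (Algebra.adjoin k s).isIdempotentElem_toSubmodule.pow_succ_eq]
    exact (eq_of_le_of_finrank_le hle (hj.trans hdim)).ge
  · exact hle

section PrimeDegree

variable {p : ℕ} {α β : A}

lemma finrank_subalgebra_of_prime_degree (hp : p.Prime) (hA : finrank k A = p ^ 2)
    (B : Subalgebra k A) :
    finrank k B = 1 ∨ finrank k B = p ∨ finrank k B = p ^ 2 := by
  have hdvd := finrank_subalgebra_dvd_finrank B ⊤ fun _ _ _ _ => trivial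
  rw [finrank_top, hA, Nat.dvd_prime_pow hp] at hdvd
  obtain ⟨j, hj, hB⟩ := hdvd
  interval_cases j <;> simp [hB]

omit [FiniteDimensional k A] in
lemma finrank_adjoin_singleton_ne_one_of_not_commute (hαβ : α * β ≠ β * α) :
    finrank k (Algebra.adjoin k {α}) ≠ 1 := by
  intro hone
  have hα : α ∈ Algebra.adjoin k {α} := Algebra.self_mem_adjoin_singleton k α
  rw [Subalgebra.finrank_eq_one_iff.1 hone] at hα
  obtain ⟨q, rfl⟩ := Algebra.mem_bot.1 hα
  exact hαβ (Algebra.commutes q β)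

lemma finrank_adjoin_singleton_lt_of_not_commute (hαβ : α * β ≠ β * α) :
    finrank k (Algebra.adjoin k {α}) < finrank k (Algebra.adjoin k {α, β}) := by
  refine finrank_lt_finrank_of_lt (s := (Algebra.adjoin k {α}).toSubmodule)
    (t := (Algebra.adjoin k {α, β}).toSubmodule) (SetLike.lt_iff_le_and_exists.2
      ⟨Algebra.adjoin_mono (by simp), β, Algebra.subset_adjoin (by simp), ?_⟩)
  exact fun hβ => hαβ (Algebra.commute_of_mem_adjoin_self hβ)

lemma finrank_adjoin_singleton_of_not_commute (hp : p.Prime) (hA : finrank k A = p ^ 2)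
    (hαβ : α * β ≠ β * α) : finrank k (Algebra.adjoin k {α}) = p := by
  have hlt := finrank_adjoin_singleton_lt_of_not_commute (k := k) hαβ
  have hle : finrank k (Algebra.adjoin k {α, β}) ≤ p ^ 2 :=
    hA ▸ Submodule.finrank_le (Algebra.adjoin k {α, β}).toSubmodule
  rcases finrank_subalgebra_of_prime_degree hp hA (Algebra.adjoin k {α}) with h | h | h
  · exact absurd h (finrank_adjoin_singleton_ne_one_of_not_commute hαβ)
  · exact h
  · omega

lemma adjoin_pair_eq_top_of_not_commute (hp : p.Prime) (hA : finrank k A = p ^ 2)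
    (hαβ : α * β ≠ β * α) : Algebra.adjoin k {α, β} = ⊤ := by
  have hlt := finrank_adjoin_singleton_lt_of_not_commute (k := k) hαβ
  rw [finrank_adjoin_singleton_of_not_commute hp hA hαβ] at hlt
  refine Algebra.toSubmodule_eq_top.1 (eq_top_of_finrank_eq ?_)
  have hp2 := hp.two_le
  rcases finrank_subalgebra_of_prime_degree hp hA (Algebra.adjoin k {α, β}) with h | h | h
  · omega
  · omega
  · exact h.trans hA.symm

-- `k[α]` is reached after `p - 1` factors, and each further factor adds at least one
-- `k[α]`-dimension out of the `p` that make up `A`.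
lemma span_one_pair_pow_eq_top_of_not_commute (hp : p.Prime) (hA : finrank k A = p ^ 2)
    (hαβ : α * β ≠ β * α) : span k {1, α, β} ^ (2 * (p - 1)) = ⊤ := by
  have hpred : p - 1 + 1 = p := Nat.sub_add_cancel hp.one_le
  have hα := finrank_adjoin_singleton_of_not_commute hp hA hαβ
  have htop := adjoin_pair_eq_top_of_not_commute hp hA hαβ
  have hstep₁ : (Algebra.adjoin k {α}).toSubmodule ≤ span k {1, α} ^ (p - 1) := by
    have hle := adjoin_le_mul_span_pow (k := k) (E := ⊥) (s := {α}) (j := p - 1) bot_le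
      (by rw [hα, hpred, Subalgebra.finrank_bot, mul_one])
    rwa [Algebra.toSubmodule_bot, one_mul] at hle
  have hstep₂ := adjoin_le_mul_span_pow (E := Algebra.adjoin k {α}) (s := {α, β}) (j := p - 1)
    (Algebra.adjoin_mono (by simp)) (by
      rw [hα, hpred, htop, ← sq, ← hA]
      exact Submodule.finrank_le (⊤ : Subalgebra k A).toSubmodule)
  rw [eq_top_iff, ← Algebra.top_toSubmodule, ← htop, two_mul, pow_add]
  refine hstep₂.trans (mul_le_mul' (hstep₁.trans ?_) le_rfl)
  exact pow_le_pow_left' (span_mono (Set.insert_subset_insert (by simp))) _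

end PrimeDegree

end WordSpan

section Conjugation

variable {k L A n : Type*} [CommRing k] [CommRing L] [Algebra k L] [Ring A] [Algebra k A]
  [Fintype n] [DecidableEq n]

/-- The representation `γ ↦ z⁻¹ (f γ) z` obtained by conjugating `f`; it absorbs the base point `z`
of `𝒪(m; z, δ)`. -/
noncomputable def conjEmbedding (f : A →ₐ[k] Matrix n n L) (z : GL n L) : A →ₐ[k] Matrix n n L :=
  (MulSemiringAction.toAlgHom k (Matrix n n L) (ConjAct.toConjAct z⁻¹)).comp f

lemma conjEmbedding_apply (f : A →ₐ[k] Matrix n n L) (z : GL n L) (γ : A) :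
    conjEmbedding f z γ = (↑z⁻¹ : Matrix n n L) * f γ * (↑z : Matrix n n L) := by
  simp [conjEmbedding, ConjAct.units_smul_def]

lemma trace_conjEmbedding (f : A →ₐ[k] Matrix n n L) (z : GL n L) (γ : A) :
    (conjEmbedding f z γ).trace = (f γ).trace := by
  rw [conjEmbedding_apply, trace_units_conj']

lemma det_conjEmbedding (f : A →ₐ[k] Matrix n n L) (z : GL n L) (γ : A) :
    (conjEmbedding f z γ).det = (f γ).det := by
  rw [conjEmbedding_apply, det_units_conj']

end Conjugation

lemma IsDisc.conjEmbedding {n : ℕ} {A : Type*} [DivisionRing A] [CharZero A]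
    {ι : A →ₐ[ℚ] Matrix (Fin n) (Fin n) ℝ} {O : Subring A} {D : ℕ} (hD : IsDisc ι O D)
    (z : GL (Fin n) ℝ) : IsDisc (conjEmbedding ι z) O D := by
  simpa only [IsDisc, trace_conjEmbedding] using hD

section NormBox

/-- The elements of `O` with reduced norm `m` all of whose matrix entries are at most `Y` in
absolute value. -/
def normBox {n A : Type*} [Fintype n] [DecidableEq n] [Ring A] [Algebra ℚ A]
    (f : A →ₐ[ℚ] Matrix n n ℝ) (O : Subring A) (m : ℕ) (Y : ℝ) : Set A :=
  {γ | γ ∈ O ∧ (f γ).det = m ∧ ∀ i j, |f γ i j| ≤ Y}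

lemma OSet_subset_normBox {n : ℕ} {A : Type*} [DivisionRing A] [CharZero A]
    (ι : A →ₐ[ℚ] Matrix (Fin n) (Fin n) ℝ) (O : Subring A) (z : GL (Fin n) ℝ) {m : ℕ} (hm : m ≠ 0)
    (δ : ℝ) :
    OSet ι O z m δ ⊆ normBox (conjEmbedding ι z) O m ((1 + δ) * (m : ℝ) ^ (1 / n : ℝ)) := by
  rintro γ ⟨hγO, hdet, k, ⟨hk, -⟩, hclose⟩
  refine ⟨hγO, by rw [det_conjEmbedding, hdet], fun i j => ?_⟩
  have hy : 0 < (m : ℝ) ^ (1 / n : ℝ) := Real.rpow_pos_of_pos (by positivity) _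
  have hkij : |k i j| ≤ 1 :=
    entry_norm_bound_of_unitary (mem_unitaryGroup_iff'.2 hk) i j
  have hij := hclose i j
  rw [← conjEmbedding_apply, neg_div, Real.rpow_neg (Nat.cast_nonneg m), Matrix.sub_apply,
    Matrix.smul_apply, smul_eq_mul] at hij
  have hscaled : ((m : ℝ) ^ (1 / n : ℝ))⁻¹ * |conjEmbedding ι z γ i j| ≤ 1 + δ := by
    rw [← abs_of_pos (inv_pos.2 hy), ← abs_mul]
    linarith [abs_sub_abs_le_abs_sub (((m : ℝ) ^ (1 / n : ℝ))⁻¹ * conjEmbedding ι z γ i j) (k i j)]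
  rwa [inv_mul_le_iff₀ hy, mul_comm] at hscaled

end NormBox

section EntryBounds

variable {n : Type*} [Fintype n] {M N : Matrix n n ℝ} {a b : ℝ}

lemma abs_matrix_mul_apply_le (hM : ∀ i j, |M i j| ≤ a) (hN : ∀ i j, |N i j| ≤ b) (i j : n) :
    |(M * N) i j| ≤ a * (Fintype.card n * b) := by
  have ha : 0 ≤ a := (abs_nonneg _).trans (hM i i)
  calc |(M * N) i j| ≤ ∑ l, |M i l * N l j| := Finset.abs_sum_le_sum_abs _ _
    _ ≤ ∑ _l : n, a * b := Finset.sum_le_sum fun l _ => by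
        rw [abs_mul]
        exact mul_le_mul (hM i l) (hN l j) (abs_nonneg _) ha
    _ = a * (Fintype.card n * b) := by
        rw [Finset.sum_const, Finset.card_univ, nsmul_eq_mul]
        ring

lemma abs_trace_le (hM : ∀ i j, |M i j| ≤ a) : |M.trace| ≤ Fintype.card n * a :=
  calc |M.trace| ≤ ∑ i, |M i i| := Finset.abs_sum_le_sum_abs _ _
    _ ≤ ∑ _i : n, a := Finset.sum_le_sum fun i _ => hM i i
    _ = Fintype.card n * a := by rw [Finset.sum_const, Finset.card_univ, nsmul_eq_mul]

variable [DecidableEq n]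

omit [Fintype n] in
lemma abs_one_matrix_apply_le_one (i j : n) : |(1 : Matrix n n ℝ) i j| ≤ 1 := by
  rw [one_apply]
  split_ifs <;> simp

open scoped Pointwise in
lemma abs_map_apply_le_of_mem_pow {G : Type*} [Monoid G] (f : G →* Matrix n n ℝ) {T : Set G}
    {Y : ℝ} (hT : ∀ t ∈ T, ∀ i j, |f t i j| ≤ Y) {l : ℕ} {w : G} (hw : w ∈ T ^ l) (i j : n) :
    |f w i j| ≤ (Fintype.card n * Y) ^ l := by
  induction l generalizing w i j with
  | zero =>
    rw [pow_zero, Set.mem_one] at hw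
    rw [hw, map_one, pow_zero]
    exact abs_one_matrix_apply_le_one i j
  | succ l ih =>
    rw [pow_succ, Set.mem_mul] at hw
    obtain ⟨u, hu, v, hv, rfl⟩ := hw
    rw [map_mul, pow_succ]
    exact abs_matrix_mul_apply_le (ih hu) (hT v hv) i j

lemma abs_det_traceGram_le {k A : Type*} [Field k] [Algebra k ℝ] [Ring A] [Algebra k A]
    (f : A →ₐ[k] Matrix n n ℝ) {κ : Type*} [Fintype κ] [DecidableEq κ] {x : κ → A} {X : ℝ}
    (hx : ∀ l i j, |f (x l) i j| ≤ X) :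
    |(traceGram f x).det| ≤ (Fintype.card κ).factorial *
      (Fintype.card n * X) ^ (2 * Fintype.card κ) := by
  have hentry (i j : κ) : |traceGram f x i j| ≤ (Fintype.card n * X) ^ 2 := by
    rw [traceGram, of_apply, map_mul]
    calc |(f (x i) * f (x j)).trace|
        ≤ Fintype.card n * (X * (Fintype.card n * X)) :=
          abs_trace_le (abs_matrix_mul_apply_le (hx i) (hx j))
      _ = (Fintype.card n * X) ^ 2 := by ring
  have hdet := det_le (abv := AbsoluteValue.abs) hentry
  rwa [nsmul_eq_mul, ← pow_mul] at hdet

end EntryBounds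

section NotCommuting

variable {p : ℕ} {A : Type*} [DivisionRing A] [CharZero A] [Algebra.IsCentral ℚ A]
  {ι : A →ₐ[ℚ] Matrix (Fin p) (Fin p) ℝ} {O : Subring A} {D : ℕ}

open scoped Pointwise in
lemma IsDisc.le_of_not_commute (hp : p.Prime) (hA : Module.finrank ℚ A = p ^ 2)
    (hO : IsOrder A O) (hD : IsDisc ι O D) {Y : ℝ} (hY : 1 ≤ Y) {α β : A} (hα : α ∈ O) (hβ : β ∈ O)
    (hαY : ∀ i j, |ι α i j| ≤ Y) (hβY : ∀ i j, |ι β i j| ≤ Y) (hαβ : α * β ≠ β * α) :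
    (D : ℝ) ≤ (p ^ 2).factorial * (p * (p * Y) ^ (2 * (p - 1))) ^ (2 * p ^ 2) := by
  have : NeZero p := ⟨hp.ne_zero⟩
  have := finiteDimensional_of_finrank_eq_card_sq (n := Fin p) (by rwa [Fintype.card_fin])
  have hspan := span_one_pair_pow_eq_top_of_not_commute hp hA hαβ
  rw [Submodule.span_pow] at hspan
  obtain ⟨b, hb⟩ := exists_basis_mem_of_span_eq_top hspan hA
  have hbO (i) : b i ∈ O := by
    have hgen : ({1, α, β} : Set A) ⊆ O.toSubmonoid := by
      simp [Set.insert_subset_iff, hα, hβ, O.one_mem]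
    exact Submonoid.pow_subset hgen (hb i)
  have hgenY : ∀ t ∈ ({1, α, β} : Set A), ∀ i j, |ι t i j| ≤ Y := by
    rintro t (rfl | rfl | rfl)
    · rw [map_one]
      exact fun i j => (abs_one_matrix_apply_le_one i j).trans hY
    · exact hαY
    · exact hβY
  have hbY (l) : ∀ i j, |ι (b l) i j| ≤ (p * Y) ^ (2 * (p - 1)) := by
    simpa only [Fintype.card_fin, AlgHom.coe_toMonoidHom] using
      abs_map_apply_le_of_mem_pow (ι : A →* Matrix (Fin p) (Fin p) ℝ) hgenY (hb l)
  calc (D : ℝ) ≤ |(traceGram ι b).det| := hD.le_abs_det_traceGram hO b hbO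
    _ ≤ _ := by simpa only [Fintype.card_fin] using abs_det_traceGram_le ι hbY

lemma IsDisc.le_mul_pow_of_not_commute (hp : p.Prime) (hA : Module.finrank ℚ A = p ^ 2)
    (hO : IsOrder A O) (hD : IsDisc ι O D) {R : ℝ} (hR : 1 ≤ R) {m : ℕ} (hm : m ≠ 0) {α β : A}
    (hα : α ∈ normBox ι O m (R * (m : ℝ) ^ (1 / p : ℝ)))
    (hβ : β ∈ normBox ι O m (R * (m : ℝ) ^ (1 / p : ℝ))) (hαβ : α * β ≠ β * α) :
    (D : ℝ) ≤ (p ^ 2).factorial * (p * (p * R) ^ (2 * (p - 1))) ^ (2 * p ^ 2) *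
      (m : ℝ) ^ (4 * p * (p - 1)) := by
  have hm1 : (1 : ℝ) ≤ m := mod_cast Nat.one_le_iff_ne_zero.2 hm
  have hroot : 1 ≤ (m : ℝ) ^ (1 / p : ℝ) := Real.one_le_rpow hm1 (by positivity)
  have hpow : ((m : ℝ) ^ (1 / p : ℝ)) ^ p = m := by
    rw [one_div, Real.rpow_inv_natCast_pow (Nat.cast_nonneg m) hp.ne_zero]
  calc (D : ℝ) ≤ (p ^ 2).factorial *
        (p * (p * (R * (m : ℝ) ^ (1 / p : ℝ))) ^ (2 * (p - 1))) ^ (2 * p ^ 2) :=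
      hD.le_of_not_commute hp hA hO (one_le_mul_of_one_le_of_one_le hR hroot) hα.1 hβ.1
        hα.2.2 hβ.2.2 hαβ
    _ = (p ^ 2).factorial * (p * (p * R) ^ (2 * (p - 1))) ^ (2 * p ^ 2) *
        (((m : ℝ) ^ (1 / p : ℝ)) ^ p) ^ (4 * p * (p - 1)) := by ring
    _ = _ := by rw [hpow]

lemma exists_forall_normBox_commute.{u} (hp : p.Prime) {R : ℝ} (hR : 1 ≤ R) :
    ∃ c : ℝ, 0 < c ∧ ∀ (A : Type u) [DivisionRing A] [CharZero A] [Algebra.IsCentral ℚ A]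
      (ι : A →ₐ[ℚ] Matrix (Fin p) (Fin p) ℝ), Module.finrank ℚ A = p ^ 2 →
      ∀ O : Subring A, IsOrder A O → ∀ D : ℕ, IsDisc ι O D →
      ∀ m : ℕ, m ≠ 0 → (m : ℝ) ≤ c * (D : ℝ) ^ (1 / (4 * p * (p - 1)) : ℝ) →
      ∀ α ∈ normBox ι O m (R * (m : ℝ) ^ (1 / p : ℝ)),
      ∀ β ∈ normBox ι O m (R * (m : ℝ) ^ (1 / p : ℝ)), α * β = β * α := by
  have : NeZero p := ⟨hp.ne_zero⟩
  have hE : 4 * p * (p - 1) ≠ 0 :=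
    mul_ne_zero (mul_ne_zero four_ne_zero hp.ne_zero) (Nat.sub_ne_zero_of_lt hp.one_lt)
  have hEcast : (4 * p * (p - 1) : ℝ) = (4 * p * (p - 1) : ℕ) := by
    rw [← Nat.cast_pred hp.pos]
    push_cast
    rfl
  set Q : ℝ := (p ^ 2).factorial * (p * (p * R) ^ (2 * (p - 1))) ^ (2 * p ^ 2)
  have hQ : 0 < Q := by have := hp.pos; positivity
  refine ⟨(2 * Q)⁻¹ ^ (1 / (4 * p * (p - 1)) : ℝ), by positivity, ?_⟩
  intro A _ _ _ ι hA O hO D hD m hm hmD α hα β hβ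
  by_contra hαβ
  have hDm := hD.le_mul_pow_of_not_commute hp hA hO hR hm hα hβ hαβ
  have hmE : (m : ℝ) ^ (4 * p * (p - 1)) ≤ (2 * Q)⁻¹ * D := by
    rw [← Real.mul_rpow (by positivity) (by positivity), hEcast, one_div] at hmD
    rw [← Real.rpow_natCast]
    exact (Real.le_rpow_inv_iff_of_pos (by positivity) (by positivity) (by positivity)).1 hmD
  have hDpos : (0 : ℝ) < D := mod_cast Nat.pos_of_ne_zero (hD.ne_zero hO hA)
  have hhalf : (D : ℝ) ≤ D / 2 :=
    calc (D : ℝ) ≤ Q * (m : ℝ) ^ (4 * p * (p - 1)) := hDm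
      _ ≤ Q * ((2 * Q)⁻¹ * D) := by gcongr
      _ = D / 2 := by field_simp
  linarith

end NotCommuting

section DivisorBound

open NumberField UniqueFactorizationMonoid

lemma natCast_add_one_le_pow {x : ℝ} (hx : 2 ≤ x) (c : ℕ) : (c + 1 : ℝ) ≤ x ^ c :=
  calc (c + 1 : ℝ) ≤ 2 ^ c := mod_cast Nat.lt_two_pow_self
    _ ≤ x ^ c := by gcongr

lemma natCast_add_one_le_mul_pow {t x : ℝ} (ht : 0 < t) (hx : 1 + t ≤ x) (c : ℕ) :
    (c + 1 : ℝ) ≤ (1 + 1 / t) * x ^ c :=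
  calc (c + 1 : ℝ) ≤ (c + 1) + (1 / t + c * t) := le_add_of_nonneg_right (by positivity)
    _ = (1 + 1 / t) * (1 + c * t) := by
        field_simp
        ring
    _ ≤ (1 + 1 / t) * (1 + t) ^ c := by
        gcongr
        exact one_add_mul_le_pow (by linarith) c
    _ ≤ (1 + 1 / t) * x ^ c := by gcongr

lemma exists_natCast_add_one_le_mul_rpow {ε : ℝ} (hε : 0 < ε) :
    ∃ (B : ℝ) (X : ℕ), 1 ≤ B ∧ ∀ c N : ℕ, 1 < N →
      (c + 1 : ℝ) ≤ (if N < X then B else 1) * ((N : ℝ) ^ c) ^ ε := by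
  have ht : (0 : ℝ) < 2 ^ ε - 1 := sub_pos.2 (Real.one_lt_rpow one_lt_two hε)
  refine ⟨1 + 1 / (2 ^ ε - 1), ⌈(2 : ℝ) ^ ε⁻¹⌉₊, le_add_of_nonneg_right (by positivity), ?_⟩
  intro c N hN
  rw [← Real.rpow_pow_comm (Nat.cast_nonneg N)]
  split_ifs with hNX
  · have h2N : (2 : ℝ) ≤ N := mod_cast hN
    refine natCast_add_one_le_mul_pow ht ?_ c
    rw [add_sub_cancel]
    gcongr
  · rw [one_mul]
    refine natCast_add_one_le_pow ?_ c
    exact (Real.rpow_inv_le_iff_of_pos zero_le_two (Nat.cast_nonneg N) hε).1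
      (Nat.ceil_le.1 (not_lt.1 hNX))

lemma ncard_dvd_le_prod_count {M : Type*} [CommMonoidWithZero M] [UniqueFactorizationMonoid M]
    [Subsingleton Mˣ] [NormalizationMonoid M] [DecidableEq M] {a : M} (ha : a ≠ 0) :
    {b | b ∣ a}.Finite ∧ {b | b ∣ a}.ncard ≤
      ∏ q ∈ (normalizedFactors a).toFinset, ((normalizedFactors a).count q + 1) := by
  have hinj : Set.InjOn normalizedFactors {b | b ∣ a} := fun b hb b' hb' hbb' =>
    associated_iff_eq.1 ((associated_iff_normalizedFactors_eq_normalizedFactors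
      (ne_zero_of_dvd_ne_zero ha hb) (ne_zero_of_dvd_ne_zero ha hb')).2 hbb')
  have hmaps : Set.MapsTo normalizedFactors {b | b ∣ a}
      (Finset.Iic (normalizedFactors a) : Finset (Multiset M)) := fun b hb =>
    Finset.mem_coe.2 (Finset.mem_Iic.2 ((dvd_iff_normalizedFactors_le_normalizedFactors
      (ne_zero_of_dvd_ne_zero ha hb) ha).1 hb))
  refine ⟨Set.Finite.of_injOn hmaps hinj (Finset.finite_toSet _), ?_⟩
  rw [← Multiset.card_Iic, ← Set.ncard_coe_finset]
  exact Set.ncard_le_ncard_of_injOn _ hmaps hinj (Finset.finite_toSet _)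

lemma ncard_primesOver_le_finrank {R : Type*} (S : Type*) [CommRing R] [IsDomain R] [CommRing S]
    [Algebra R S] [Module.Finite R S] [Module.Flat R S] (P : Ideal R) [P.IsPrime] :
    (P.primesOver S).ncard ≤ Module.finrank R S := by
  have := (Algebra.QuasiFinite.finite_primesOver (S := S) P).fintype
  rw [← Ideal.sum_ramification_inertia_eq_finrank P S, ← Nat.card_coe_set_eq,
    Nat.card_eq_fintype_card, ← Finset.card_univ, Finset.card_eq_sum_ones]
  refine Finset.sum_le_sum fun Q _ => ?_
  have : Q.1.IsPrime := Q.2.1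
  exact one_le_mul_of_one_le_of_one_le (Q.1.ramificationIdx_pos R) (Q.1.inertiaDeg_pos R)

variable {K : Type*} [Field K] [NumberField K]

lemma card_primes_absNorm_lt_le {X : ℕ} {T : Finset (Ideal (𝓞 K))}
    (hT : ∀ P ∈ T, P.IsPrime ∧ P ≠ ⊥ ∧ Ideal.absNorm P < X) :
    T.card ≤ X * Module.finrank ℚ K := by
  classical
  have hprime {P} (hP : P ∈ T) : (Ideal.absNorm (P.under ℤ)).Prime :=
    have : NeZero P := ⟨(hT P hP).2.1⟩
    have := (hT P hP).1
    Nat.absNorm_under_prime P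
  have hmaps : ∀ P ∈ T, Ideal.absNorm (P.under ℤ) ∈ Finset.range X := by
    intro P hP
    have hpos := Nat.pos_of_ne_zero (Ideal.absNorm_eq_zero_iff.not.2 (hT P hP).2.1)
    have hle := Nat.le_of_dvd hpos (Int.absNorm_under_dvd_absNorm P)
    exact Finset.mem_range.2 (hle.trans_lt (hT P hP).2.2)
  have hfiber : ∀ q ∈ Finset.range X,
      (T.filter fun P => Ideal.absNorm (P.under ℤ) = q).card ≤ Module.finrank ℚ K := by
    intro q _
    rcases (T.filter fun P => Ideal.absNorm (P.under ℤ) = q).eq_empty_or_nonempty with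
      hempty | ⟨Q, hQ⟩
    · simp [hempty]
    obtain ⟨hQT, rfl⟩ := Finset.mem_filter.1 hQ
    have : Fact (Ideal.absNorm (Q.under ℤ)).Prime := ⟨hprime hQT⟩
    rw [← RingOfIntegers.rank K, ← Set.ncard_coe_finset]
    refine le_trans (Set.ncard_le_ncard fun P hP => ?_) (ncard_primesOver_le_finrank (𝓞 K)
      (Ideal.span {(Ideal.absNorm (Q.under ℤ) : ℤ)}))
    obtain ⟨hPT, hPQ⟩ := Finset.mem_filter.1 hP
    exact ⟨(hT P hPT).1, hPQ ▸ Int.liesOver_span_absNorm P⟩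
  simpa [mul_comm] using Finset.card_le_mul_card_image_of_maps_to hmaps _ hfiber

lemma one_lt_absNorm_of_isPrime {P : Ideal (𝓞 K)} [hP : P.IsPrime] (hbot : P ≠ ⊥) :
    1 < Ideal.absNorm P :=
  Nat.one_lt_iff_ne_zero_and_ne_one.2
    ⟨Ideal.absNorm_eq_zero_iff.not.2 hbot, Ideal.absNorm_eq_one_iff.not.2 hP.ne_top⟩

lemma prod_absNorm_pow_count [DecidableEq (Ideal (𝓞 K))] {I : Ideal (𝓞 K)} (hI : I ≠ ⊥) :
    ∏ P ∈ (normalizedFactors I).toFinset, Ideal.absNorm P ^ (normalizedFactors I).count P =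
      Ideal.absNorm I := by
  rw [← Finset.prod_multiset_map_count, ← map_multiset_prod,
    associated_iff_eq.1 (prod_normalizedFactors hI)]

lemma exists_ncard_ideal_dvd_le.{u} (d : ℕ) {ε : ℝ} (hε : 0 < ε) :
    ∃ C : ℝ, 0 < C ∧ ∀ (K : Type u) [Field K] [NumberField K], Module.finrank ℚ K ≤ d →
      ∀ I : Ideal (𝓞 K), I ≠ ⊥ →
      {J | J ∣ I}.Finite ∧ ({J | J ∣ I}.ncard : ℝ) ≤ C * (Ideal.absNorm I : ℝ) ^ ε := by
  classical
  obtain ⟨B, X, hB, hBX⟩ := exists_natCast_add_one_le_mul_rpow hε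
  refine ⟨B ^ (X * d), by positivity, fun K _ _ hd I hI => ?_⟩
  obtain ⟨hfin, hcard⟩ := ncard_dvd_le_prod_count (a := I) hI
  refine ⟨hfin, ?_⟩
  set s := normalizedFactors I
  have hprime : ∀ P ∈ s.toFinset, P.IsPrime ∧ P ≠ ⊥ := fun P hP =>
    have hP' := prime_of_normalized_factor P (Multiset.mem_toFinset.1 hP)
    ⟨Ideal.isPrime_of_prime hP', hP'.ne_zero⟩
  have hsmall : (s.toFinset.filter fun P => Ideal.absNorm P < X).card ≤ X * d := by
    refine (card_primes_absNorm_lt_le fun P hP => ?_).trans (Nat.mul_le_mul_left X hd)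
    rw [Finset.mem_filter] at hP
    exact ⟨(hprime P hP.1).1, (hprime P hP.1).2, hP.2⟩
  calc ({J | J ∣ I}.ncard : ℝ) ≤ ∏ P ∈ s.toFinset, (s.count P + 1 : ℝ) := mod_cast hcard
    _ ≤ ∏ P ∈ s.toFinset, ((if Ideal.absNorm P < X then B else 1) *
          ((Ideal.absNorm P : ℝ) ^ s.count P) ^ ε) :=
        Finset.prod_le_prod (fun _ _ => by positivity) fun P hP =>
          have := (hprime P hP).1
          hBX _ _ (one_lt_absNorm_of_isPrime (hprime P hP).2)
    _ = B ^ (s.toFinset.filter fun P => Ideal.absNorm P < X).card *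
          (Ideal.absNorm I : ℝ) ^ ε := by
        rw [Finset.prod_mul_distrib, Finset.prod_ite, Finset.prod_const_one, mul_one,
          Finset.prod_const, Real.finsetProd_rpow _ _ (fun _ _ => by positivity),
          ← prod_absNorm_pow_count hI]
        push_cast
        rfl
    _ ≤ B ^ (X * d) * (Ideal.absNorm I : ℝ) ^ ε := by gcongr

end DivisorBound

section GridCell

variable {n : Type*} {s : ℝ} {M N : Matrix n n ℝ}

/-- The cell containing `M` of the partition of `Mₙ(ℝ)` into half-open cubes of side `s`. -/
noncomputable def gridCell (s : ℝ) (M : Matrix n n ℝ) : n → n → ℤ := fun i j => ⌊M i j / s⌋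

lemma gridCell_mem_Icc (hs : 0 < s) {Y : ℝ} (hM : ∀ i j, |M i j| ≤ Y) :
    gridCell s M ∈ Set.Icc (fun _ _ => ⌊-(Y / s)⌋) (fun _ _ => ⌊Y / s⌋) := by
  refine ⟨fun i j => Int.floor_le_floor ?_, fun i j => Int.floor_le_floor ?_⟩
  · rw [← neg_div]
    exact div_le_div_of_nonneg_right (abs_le.1 (hM i j)).1 hs.le
  · exact div_le_div_of_nonneg_right (abs_le.1 (hM i j)).2 hs.le

lemma abs_sub_apply_le_of_gridCell_eq (hs : 0 < s) (hMN : gridCell s M = gridCell s N) (i j : n) :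
    |(M - N) i j| ≤ s := by
  have hlt := Int.abs_sub_lt_one_of_floor_eq_floor (congrFun₂ hMN i j)
  rw [← sub_div, abs_div, abs_of_pos hs, div_lt_one hs] at hlt
  exact hlt.le

lemma abs_det_sub_le_of_gridCell_eq [Fintype n] [DecidableEq n] (hs : 0 < s)
    (hMN : gridCell s M = gridCell s N) :
    |(M - N).det| ≤ (Fintype.card n).factorial * s ^ Fintype.card n := by
  have hdet := det_le (abv := AbsoluteValue.abs) (abs_sub_apply_le_of_gridCell_eq hs hMN)
  rwa [nsmul_eq_mul] at hdet

end GridCell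

section Subfield

lemma numberField_of_ringHom {K A : Type*} [Field K] [DivisionRing A] [CharZero A]
    [FiniteDimensional ℚ A] (f : K →+* A) : NumberField K :=
  have : CharZero K := (RingHom.charZero_iff f.injective).2 inferInstance
  { to_charZero := this
    to_finiteDimensional :=
      FiniteDimensional.of_injective f.toRatAlgHom.toLinearMap f.injective }

open scoped IsMulCommutative in
lemma exists_numberField_of_commute.{u} {A : Type u} [DivisionRing A] [CharZero A]
    [FiniteDimensional ℚ A] {S : Set A} (hS : ∀ a ∈ S, ∀ b ∈ S, a * b = b * a) :
    ∃ (K : Type u) (_ : Field K) (_ : NumberField K) (f : K →ₐ[ℚ] A), S ⊆ Set.range f := by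
  have := Algebra.isMulCommutative_adjoin ℚ hS
  let _ : Field (Algebra.adjoin ℚ S) := fieldOfFiniteDimensional ℚ (Algebra.adjoin ℚ S)
  let f : Algebra.adjoin ℚ S →+* A := (Algebra.adjoin ℚ S).subtype
  exact ⟨Algebra.adjoin ℚ S, inferInstance, numberField_of_ringHom f, f.toRatAlgHom,
    fun a ha => ⟨⟨a, Algebra.subset_adjoin ha⟩, rfl⟩⟩

open scoped NumberField in
lemma subset_range_integers_of_isOrder {K A : Type*} [Field K] [CharZero K] [Ring A] [Nontrivial A]
    [Algebra ℚ A] (f : K →ₐ[ℚ] A) {O : Subring A} (hO : IsOrder A O) {S : Set A}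
    (hSO : S ⊆ O) (hf : S ⊆ Set.range f) : S ⊆ Set.range fun g : 𝓞 K => f g := by
  intro γ hγ
  obtain ⟨g, rfl⟩ := hf hγ
  have hg : IsIntegral ℤ g :=
    (isIntegral_algHom_iff (f.restrictScalars ℤ) f.injective).1
      (isIntegral_of_mem_order hO (hSO hγ))
  exact ⟨⟨g, hg⟩, rfl⟩

lemma exists_norm_map_eq_norm_pow {k K A : Type*} [Field k] [Field K] [Algebra k K] [Ring A]
    [Nontrivial A] [Algebra k A] [FiniteDimensional k A] (f : K →ₐ[k] A) :
    ∃ r ≠ 0, ∀ g, Algebra.norm k (f g) = Algebra.norm k g ^ r := by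
  let _ : Module K A := Module.compHom A (f : K →+* A)
  have : IsScalarTower k K A := ⟨fun q g a => by
    change f (q • g) * a = q • (f g * a)
    rw [map_smul, smul_mul_assoc]⟩
  have : Module.Finite K A := Module.Finite.of_restrictScalars_finite k K A
  refine ⟨Module.finrank K A, Module.finrank_pos.ne', fun g => ?_⟩
  have hdet := LinearMap.det_restrictScalars (R := k) (S := K) (A := A) (f := g • LinearMap.id)
  rw [LinearMap.det_smul, LinearMap.det_id, mul_one, map_pow] at hdet
  exact hdet

end Subfield

section Commuting

open NumberField

variable {n A K : Type*} [Fintype n] [Nonempty n] [DecidableEq n] [DivisionRing A] [CharZero A]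
  [Algebra.IsCentral ℚ A] (ι : A →ₐ[ℚ] Matrix n n ℝ)
  (hA : Module.finrank ℚ A = Fintype.card n ^ 2) [Field K] [NumberField K] (f : K →ₐ[ℚ] A)

include hA

lemma exists_det_pow_eq_norm_pow : ∃ r ≠ 0, ∀ g : 𝓞 K,
    (ι (f g)).det ^ Fintype.card n = (Algebra.norm ℤ g : ℝ) ^ r := by
  have := finiteDimensional_of_finrank_eq_card_sq hA
  obtain ⟨r, hr, hnorm⟩ := exists_norm_map_eq_norm_pow f
  refine ⟨r, hr, fun g => ?_⟩
  rw [← algebraMap_norm_eq_det_pow ι hA, hnorm, ← Algebra.coe_norm_int]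
  simp

lemma one_le_abs_det_map {g : 𝓞 K} (hg : g ≠ 0) : 1 ≤ |(ι (f g)).det| := by
  obtain ⟨r, -, hdet⟩ := exists_det_pow_eq_norm_pow ι hA f
  have hnorm : (1 : ℝ) ≤ |(Algebra.norm ℤ g : ℝ)| :=
    mod_cast Int.one_le_abs (Algebra.norm_ne_zero_iff.2 hg)
  rw [← one_le_pow_iff_of_nonneg (abs_nonneg _) (Fintype.card_ne_zero (α := n)), ← abs_pow, hdet,
    abs_pow]
  exact one_le_pow₀ hnorm

lemma span_singleton_dvd_of_det_eq {g : 𝓞 K} {m : ℕ} (hg : (ι (f g)).det = m) :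
    Ideal.span {g} ∣ Ideal.span {((m ^ Fintype.card n : ℕ) : 𝓞 K)} := by
  obtain ⟨r, hr, hdet⟩ := exists_det_pow_eq_norm_pow ι hA f
  have hpow : (m : ℤ) ^ Fintype.card n = Algebra.norm ℤ g ^ r := by
    have := hdet g
    rw [hg] at this
    exact_mod_cast this
  have hnorm : Ideal.absNorm (Ideal.span {g}) ∣ m ^ Fintype.card n := by
    rw [Ideal.absNorm_span_singleton, ← Int.natCast_dvd_natCast, Int.natAbs_dvd, Nat.cast_pow, hpow]
    exact dvd_pow_self _ hr
  obtain ⟨c, hc⟩ := hnorm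
  rw [Ideal.dvd_iff_le, Ideal.span_singleton_le_iff_mem, hc, Nat.cast_mul]
  exact Ideal.mul_mem_right _ _ (Ideal.absNorm_mem _)

lemma abs_det_map_le_abs_det_sub_of_span_eq {g g' : 𝓞 K} (hne : g ≠ g')
    (hspan : Ideal.span {g} = Ideal.span {g'}) :
    |(ι (f g)).det| ≤ |(ι (f g) - ι (f g')).det| := by
  obtain ⟨u, rfl⟩ := Ideal.span_singleton_eq_span_singleton.1 hspan
  have hu : (1 - u : 𝓞 K) ≠ 0 := fun h => hne (by rw [← sub_eq_zero.1 h, mul_one])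
  have hfactor : ι (f g) - ι (f (g * u : 𝓞 K)) = ι (f g) * ι (f (1 - u : 𝓞 K)) := by
    simp [mul_sub]
  rw [hfactor, det_mul, abs_mul]
  exact le_mul_of_one_le_right (abs_nonneg _) (one_le_abs_det_map ι hA f hu)

lemma injOn_gridCell_span {m : ℕ} {s : ℝ} {T : Set (𝓞 K)} (hs : 0 < s)
    (hsm : (Fintype.card n).factorial * s ^ Fintype.card n < m)
    (hdet : ∀ g ∈ T, (ι (f g)).det = m) :
    Set.InjOn (fun g : 𝓞 K => (gridCell s (ι (f g)), Ideal.span {g})) T := by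
  intro g hg g' _ heq
  obtain ⟨hcell, hspan⟩ := Prod.mk.inj heq
  by_contra hne
  have hle := (abs_det_map_le_abs_det_sub_of_span_eq ι hA f hne hspan).trans
    (abs_det_sub_le_of_gridCell_eq hs hcell)
  rw [hdet g hg, Nat.abs_cast] at hle
  exact hle.not_gt hsm

lemma finite_and_ncard_le_of_det_eq {m : ℕ} {s Y : ℝ} {T : Set (𝓞 K)} (hs : 0 < s)
    (hsm : (Fintype.card n).factorial * s ^ Fintype.card n < m)
    (hdet : ∀ g ∈ T, (ι (f g)).det = m) (hT : ∀ g ∈ T, ∀ i j, |ι (f g) i j| ≤ Y)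
    (hfin : {J | J ∣ Ideal.span {((m ^ Fintype.card n : ℕ) : 𝓞 K)}}.Finite) :
    T.Finite ∧ T.ncard ≤ (Set.Icc (fun _ _ : n => ⌊-(Y / s)⌋) (fun _ _ => ⌊Y / s⌋)).ncard *
      {J | J ∣ Ideal.span {((m ^ Fintype.card n : ℕ) : 𝓞 K)}}.ncard := by
  have hmaps : Set.MapsTo (fun g : 𝓞 K => (gridCell s (ι (f g)), Ideal.span {g})) T
      (Set.Icc (fun _ _ => ⌊-(Y / s)⌋) (fun _ _ => ⌊Y / s⌋) ×ˢ
        {J | J ∣ Ideal.span {((m ^ Fintype.card n : ℕ) : 𝓞 K)}}) := fun g hg =>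
    ⟨gridCell_mem_Icc hs (hT g hg), span_singleton_dvd_of_det_eq ι hA f (hdet g hg)⟩
  have hinj := injOn_gridCell_span ι hA f hs hsm hdet
  have hprod := (Set.finite_Icc (fun _ _ : n => ⌊-(Y / s)⌋) (fun _ _ => ⌊Y / s⌋)).prod hfin
  refine ⟨Set.Finite.of_injOn hmaps hinj hprod, ?_⟩
  rw [← Set.ncard_prod]
  exact Set.ncard_le_ncard_of_injOn _ hmaps hinj hprod

lemma finite_normBox_and_ncard_le {O : Subring A} (hO : IsOrder A O) {m : ℕ} {s Y : ℝ} (hs : 0 < s)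
    (hsm : (Fintype.card n).factorial * s ^ Fintype.card n < m)
    (hf : normBox ι O m Y ⊆ Set.range f)
    (hfin : {J | J ∣ Ideal.span {((m ^ Fintype.card n : ℕ) : 𝓞 K)}}.Finite) :
    (normBox ι O m Y).Finite ∧ (normBox ι O m Y).ncard ≤
      (Set.Icc (fun _ _ : n => ⌊-(Y / s)⌋) (fun _ _ => ⌊Y / s⌋)).ncard *
        {J | J ∣ Ideal.span {((m ^ Fintype.card n : ℕ) : 𝓞 K)}}.ncard := by
  obtain ⟨hTfin, hT⟩ := finite_and_ncard_le_of_det_eq ι hA f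
    (T := (fun g : 𝓞 K => f g) ⁻¹' normBox ι O m Y) hs hsm
    (fun g hg => hg.2.1) (fun g hg => hg.2.2) hfin
  have himage : (fun g : 𝓞 K => f g) '' ((fun g : 𝓞 K => f g) ⁻¹' normBox ι O m Y) =
      normBox ι O m Y :=
    Set.image_preimage_eq_of_subset (subset_range_integers_of_isOrder f hO (fun γ hγ => hγ.1) hf)
  rw [← himage]
  exact ⟨hTfin.image _, (Set.ncard_image_le hTfin).trans hT⟩

end Commuting

section CommutingCount

open NumberField

lemma factorial_mul_mesh_pow_lt {n m : ℕ} [NeZero n] (hm : m ≠ 0) :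
    n.factorial * ((m : ℝ) ^ (1 / n : ℝ) / (n.factorial + 1)) ^ n < m := by
  have hm' : (0 : ℝ) < m := by positivity
  have hfac : (n.factorial : ℝ) < (n.factorial + 1) ^ n :=
    (lt_add_one _).trans_le (le_self_pow₀ (by simp) (NeZero.ne n))
  rw [div_pow, one_div, Real.rpow_inv_natCast_pow hm'.le (NeZero.ne n), mul_div_assoc',
    div_lt_iff₀ (by positivity), mul_comm]
  exact mul_lt_mul_of_pos_left hfac hm'

lemma absNorm_span_natCast_rpow_le {K : Type*} [Field K] [NumberField K] {n d m : ℕ} [NeZero n]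
    [NeZero d] (hK : Module.finrank ℚ K ≤ d) (hm : m ≠ 0) {ε : ℝ} (hε : 0 < ε) :
    (Ideal.absNorm (Ideal.span {((m ^ n : ℕ) : 𝓞 K)}) : ℝ) ^ (ε / (n * d)) ≤ (m : ℝ) ^ ε := by
  have hm1 : (1 : ℝ) ≤ m := mod_cast Nat.one_le_iff_ne_zero.2 hm
  have hn : (0 : ℝ) < n := mod_cast NeZero.pos n
  have hd : (0 : ℝ) < d := mod_cast NeZero.pos d
  rw [Ideal.absNorm_span_natCast, RingOfIntegers.rank, ← pow_mul, Nat.cast_pow,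
    ← Real.rpow_natCast, ← Real.rpow_mul (by positivity)]
  refine Real.rpow_le_rpow_of_exponent_le hm1 ?_
  calc ((n * Module.finrank ℚ K : ℕ) : ℝ) * (ε / (n * d))
      ≤ ((n * d : ℕ) : ℝ) * (ε / (n * d)) := by gcongr
    _ = ε := by
      push_cast
      field_simp

lemma exists_ncard_normBox_le_of_commute.{u} (n : ℕ) [NeZero n] (R : ℝ) {ε : ℝ} (hε : 0 < ε) :
    ∃ C : ℝ, 0 < C ∧ ∀ (A : Type u) [DivisionRing A] [CharZero A] [Algebra.IsCentral ℚ A]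
      (ι : A →ₐ[ℚ] Matrix (Fin n) (Fin n) ℝ), Module.finrank ℚ A = n ^ 2 →
      ∀ O : Subring A, IsOrder A O → ∀ m : ℕ, m ≠ 0 →
      (∀ α ∈ normBox ι O m (R * (m : ℝ) ^ (1 / n : ℝ)),
        ∀ β ∈ normBox ι O m (R * (m : ℝ) ^ (1 / n : ℝ)), α * β = β * α) →
      (normBox ι O m (R * (m : ℝ) ^ (1 / n : ℝ))).Finite ∧
        ((normBox ι O m (R * (m : ℝ) ^ (1 / n : ℝ))).ncard : ℝ) ≤ C * (m : ℝ) ^ ε := by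
  obtain ⟨C, hC, hdvd⟩ := exists_ncard_ideal_dvd_le.{u} (n ^ 2) (ε := ε / (n * (n ^ 2 : ℕ)))
    (by have := NeZero.pos n; positivity)
  let cells := Set.Icc (fun _ _ : Fin n => ⌊-(R * (n.factorial + 1))⌋)
    (fun _ _ => ⌊R * (n.factorial + 1)⌋)
  refine ⟨(cells.ncard + 1) * C, by positivity, fun A _ _ _ ι hA O hO m hm hcomm => ?_⟩
  set y : ℝ := (m : ℝ) ^ (1 / n : ℝ)
  have hy : 0 < y := Real.rpow_pos_of_pos (by positivity) _
  have hA' : Module.finrank ℚ A = Fintype.card (Fin n) ^ 2 := by rw [hA, Fintype.card_fin]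
  have := finiteDimensional_of_finrank_eq_card_sq hA'
  obtain ⟨K, _, _, f, hf⟩ := exists_numberField_of_commute hcomm
  have hK : Module.finrank ℚ K ≤ n ^ 2 :=
    (LinearMap.finrank_le_finrank_of_injective (f := f.toLinearMap) f.injective).trans_eq hA
  have hI : Ideal.span {((m ^ n : ℕ) : 𝓞 K)} ≠ ⊥ := by simp [hm]
  obtain ⟨hfin, hcard⟩ := hdvd K hK _ hI
  have hratio : R * y / (y / (n.factorial + 1)) = R * (n.factorial + 1) := by field_simp
  obtain ⟨hbox, hle⟩ := finite_normBox_and_ncard_le ι hA' f hO (s := y / (n.factorial + 1))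
    (by positivity) (by simpa only [Fintype.card_fin] using factorial_mul_mesh_pow_lt hm) hf
    (by rwa [Fintype.card_fin])
  rw [hratio, Fintype.card_fin] at hle
  refine ⟨hbox, ?_⟩
  calc ((normBox ι O m (R * y)).ncard : ℝ)
      ≤ cells.ncard * {J | J ∣ Ideal.span {((m ^ n : ℕ) : 𝓞 K)}}.ncard := by
        rw [← Nat.cast_mul]
        exact Nat.cast_le.2 hle
    _ ≤ (cells.ncard + 1) * (C * (m : ℝ) ^ ε) := by
      gcongr
      · exact le_add_of_nonneg_right zero_le_one
      · exact hcard.trans (mul_le_mul_of_nonneg_left (absNorm_span_natCast_rpow_le hK hm hε) hC.le)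
    _ = (cells.ncard + 1) * C * (m : ℝ) ^ ε := (mul_assoc _ _ _).symm

end CommutingCount

theorem stmt13_general.{u} (p : ℕ) (hp : p.Prime) (δ ε : ℝ) (hδ : 0 < δ) (hε : 0 < ε) :
    ∃ c C : ℝ, 0 < c ∧ 0 < C ∧
      ∀ (A : Type u) [DivisionRing A] [CharZero A] [Algebra.IsCentral ℚ A]
        (ι : A →ₐ[ℚ] Matrix (Fin p) (Fin p) ℝ),
        Module.finrank ℚ A = p ^ 2 →
        ∀ O : Subring A, IsOrder A O →
        ∀ D : ℕ, IsDisc ι O D →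
        ∀ z : GL (Fin p) ℝ,
        ∀ m : ℕ, 1 ≤ m → (m : ℝ) ≤ c * (D : ℝ) ^ (1 / (4 * p * (p - 1)) : ℝ) →
        (OSet ι O z m δ).Finite ∧ ((OSet ι O z m δ).ncard : ℝ) ≤ C * (m : ℝ) ^ ε := by
  have : NeZero p := ⟨hp.ne_zero⟩
  obtain ⟨c, hc, hcommute⟩ := exists_forall_normBox_commute.{u} hp
    (le_add_of_nonneg_right hδ.le : (1 : ℝ) ≤ 1 + δ)
  obtain ⟨C, hC, hcount⟩ := exists_ncard_normBox_le_of_commute.{u} p (1 + δ) hε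
  refine ⟨c, C, hc, hC, fun A _ _ _ ι hA O hO D hD z m hm hmD => ?_⟩
  have hm0 : m ≠ 0 := Nat.one_le_iff_ne_zero.1 hm
  have hsub := OSet_subset_normBox ι O z hm0 δ
  obtain ⟨hfin, hcard⟩ := hcount A (conjEmbedding ι z) hA O hO m hm0
    (hcommute A (conjEmbedding ι z) hA O hO D (hD.conjEmbedding z) m hm0 hmD)
  exact ⟨hfin.subset hsub, (Nat.cast_le.2 (Set.ncard_le_ncard hsub hfin)).trans hcard⟩

/-- For a prime `p ≥ 3`, `δ ∈ (0,1]` and `ε > 0` there are `c, C > 0`,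
depending only on `p, δ, ε`, such that for every positive integer
`m ≤ c · D^(1/(4p(p-1)) - ε)` the set `𝒪(m; z, δ)` is finite with `#𝒪(m; z, δ) ≤ C·m^ε`. -/
theorem stmt13 (p : ℕ) (hp : p.Prime) (hp3 : 3 ≤ p) (δ ε : ℝ)
    (hδ0 : 0 < δ) (hδ1 : δ ≤ 1) (hε : 0 < ε) :
    ∃ c C : ℝ, 0 < c ∧ 0 < C ∧
      ∀ (A : Type) [DivisionRing A] [CharZero A]
        (ι : A →ₐ[ℚ] Matrix (Fin p) (Fin p) ℝ),
        Function.Injective ι →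
        Subalgebra.center ℚ A = ⊥ →
        Module.finrank ℚ A = p ^ 2 →
        ∀ O : Subring A, IsOrder A O →
        ∀ D : ℕ, IsDisc ι O D →
        ∀ z : Matrix.GeneralLinearGroup (Fin p) ℝ,
        ∀ m : ℕ, 1 ≤ m → (m : ℝ) ≤ c * (D : ℝ) ^ ((1 : ℝ) / (4 * p * (p - 1)) - ε) →
        (OSet ι O z m δ).Finite ∧ ((OSet ι O z m δ).ncard : ℝ) ≤ C * (m : ℝ) ^ ε := by
  have : NeZero p := ⟨hp.ne_zero⟩
  obtain ⟨c, C, hc, hC, hbound⟩ := stmt13_general p hp δ ε hδ0 hε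
  refine ⟨c, C, hc, hC, fun A _ _ ι _ hcenter hA O hO D hD z m hm hmD => ?_⟩
  have : Algebra.IsCentral ℚ A := ⟨hcenter.le⟩
  have hD1 : (1 : ℝ) ≤ D := mod_cast Nat.one_le_iff_ne_zero.2 (hD.ne_zero hO hA)
  refine hbound A ι hA O hO D hD z m hm (hmD.trans ?_)
  gcongr
  exact sub_le_self _ hε.le
end

section
/- For all integers n ≥ 1 and m ≥ 1, the set of additive subgroups H of ℤⁿ with index [ℤⁿ : H] = m is finite, and its cardinality is at most τ(m)^{n-1} · m^{n-1}. -/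
/-!
Project `ℤⁿ⁺¹` onto its first coordinate, with kernel `ℤⁿ`. A subgroup `H` of index `m` meets the
kernel in a subgroup `K` of some index `d ∣ m`, and its projection is `(m / d)ℤ`. If `x ∈ H` lies
over `m / d`, then `H = K + ℤx`, and such an `H` depends only on `x` modulo `K`; so each `K` arises
from at most `d` subgroups `H`. Hence the numbers `aₙ(m)` of subgroups of index `m` satisfy
`aₙ₊₁(m) ≤ ∑ d ∣ m, aₙ(d) * d`, and the bound follows by induction from `a₁(m) ≤ 1`.
-/

open AddSubgroup Function

theorem encard_le_encard_mul_of_encard_fiber_le {α β : Type*} {s : Set α} {t : Set β} {g : α → β}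
    {c : ℕ∞} (hg : Set.MapsTo g s t) (hc : ∀ b ∈ t, {a ∈ s | g a = b}.encard ≤ c) :
    s.encard ≤ t.encard * c := by
  have hcover : s ⊆ ⋃ b ∈ t, {a ∈ s | g a = b} := fun a ha ↦
    Set.mem_biUnion (hg ha) ⟨ha, rfl⟩
  rcases t.finite_or_infinite with ht | ht
  · calc s.encard
        ≤ (⋃ b ∈ ht.toFinset, {a ∈ s | g a = b}).encard :=
          Set.encard_le_encard (by simpa only [ht.mem_toFinset] using hcover)
      _ ≤ ∑ b ∈ ht.toFinset, {a ∈ s | g a = b}.encard := Finset.set_encard_biUnion_le _ _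
      _ ≤ ht.toFinset.card • c := Finset.sum_le_card_nsmul _ _ _ (by simpa using hc)
      _ = t.encard * c := by rw [nsmul_eq_mul, ht.encard_eq_coe_toFinset_card]
  · rcases eq_or_ne c 0 with rfl | hc0
    · have hempty : s = ∅ := Set.eq_empty_of_forall_notMem fun a ha ↦
        (Set.encard_eq_zero.mp (nonpos_iff_eq_zero.mp (hc _ (hg ha)))).subset ⟨ha, rfl⟩
      simp [hempty]
    · simp [ht.encard_eq, ENat.top_mul hc0]

theorem sum_divisors_card_pow_mul_pow_mul_le (n m : ℕ) :
    ∑ d ∈ m.divisors, d.divisors.card ^ n * d ^ n * d ≤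
      m.divisors.card ^ (n + 1) * m ^ (n + 1) := by
  calc ∑ d ∈ m.divisors, d.divisors.card ^ n * d ^ n * d
      ≤ ∑ _d ∈ m.divisors, m.divisors.card ^ n * m ^ n * m := by
        refine Finset.sum_le_sum fun d hd ↦ ?_
        have hdvd : d ∣ m := Nat.dvd_of_mem_divisors hd
        have hsub : d.divisors ⊆ m.divisors :=
          Nat.divisors_subset_of_dvd (Nat.ne_zero_of_mem_divisors hd) hdvd
        have hle : d ≤ m := Nat.divisor_le hd
        gcongr
    _ = m.divisors.card ^ (n + 1) * m ^ (n + 1) := by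
        rw [Finset.sum_const, smul_eq_mul]
        ring

theorem int_addSubgroup_eq_zmultiples_index (H : AddSubgroup ℤ) : H = zmultiples (H.index : ℤ) := by
  obtain ⟨a, ha⟩ := Int.subgroup_cyclic H
  rw [← zmultiples_eq_closure] at ha
  rw [ha, Int.index_zmultiples, Int.zmultiples_natAbs]

section Extension

variable {A G Q : Type*} [AddGroup A] [AddGroup G] [AddGroup Q] {f : A →+ G} {p : G →+ Q}

theorem eq_map_comap_sup_zmultiples (hfp : Exact f p) {H : AddSubgroup G} {x : G} (hx : x ∈ H)
    (hH : H.map p = zmultiples (p x)) : H = (H.comap f).map f ⊔ zmultiples x := by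
  refine le_antisymm (fun y hy ↦ ?_) (sup_le (map_comap_le f H) (zmultiples_le_of_mem hx))
  obtain ⟨k, hk⟩ := mem_zmultiples_iff.mp (hH ▸ mem_map_of_mem p hy)
  obtain ⟨a, ha⟩ : y - k • x ∈ Set.range f := (hfp _).mp (by simp [hk])
  have haH : a ∈ H.comap f := by
    rw [mem_comap, ha]
    exact H.sub_mem hy (H.zsmul_mem hx k)
  rw [← sub_add_cancel y (k • x), ← ha]
  exact add_mem_sup (mem_map_of_mem f haH) (zsmul_mem_zmultiples x k)

theorem encard_comap_eq_map_eq_zmultiples_le (hfp : Exact f p) (K : AddSubgroup A) (x₀ : G) :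
    {H : AddSubgroup G | H.comap f = K ∧ H.map p = zmultiples (p x₀)}.encard ≤
      ENat.card (A ⧸ K) := by
  let extension (q : A ⧸ K) : AddSubgroup G := K.map f ⊔ zmultiples (x₀ + f q.out)
  suffices hrange : {H : AddSubgroup G | H.comap f = K ∧ H.map p = zmultiples (p x₀)} ⊆
      extension '' Set.univ by
    rw [← Set.encard_univ]
    exact (Set.encard_le_encard hrange).trans (Set.encard_image_le _ _)
  rintro H ⟨rfl, hmap⟩
  obtain ⟨x, hx, hpx⟩ : p x₀ ∈ H.map p := hmap ▸ mem_zmultiples (p x₀)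
  obtain ⟨a, ha⟩ : -x₀ + x ∈ Set.range f := (hfp _).mp (by simp [hpx])
  obtain ⟨k, hk⟩ := QuotientAddGroup.mk_out_eq_add (H.comap f) a
  have hpf (b : A) : p (f b) = 0 := hfp.apply_apply_eq_zero b
  have hmem : x₀ + f (a : A ⧸ H.comap f).out ∈ H := by
    rw [hk, map_add, ha, ← add_assoc, add_neg_cancel_left]
    exact H.add_mem hx k.2
  exact ⟨a, trivial, (eq_map_comap_sup_zmultiples hfp hmem (by simp [hpf, hmap])).symm⟩

end Extension

theorem index_comap_mul_index_map {A G Q : Type*} [AddGroup A] [AddCommGroup G] [AddGroup Q]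
    {f : A →+ G} {p : G →+ Q} (hfp : Exact f p) (hp : Surjective p) (H : AddSubgroup G) :
    (H.comap f).index * (H.map p).index = H.index := by
  have hrange : f.range = p.ker := AddSubgroup.ext fun x ↦ (hfp x).symm
  calc (H.comap f).index * (H.map p).index
      = H.relIndex p.ker * (H ⊔ p.ker).index := by
        rw [index_comap, hrange, index_map, AddMonoidHom.range_eq_top.mpr hp, index_top, mul_one]
    _ = H.relIndex (H ⊔ p.ker) * (H ⊔ p.ker).index := by rw [relIndex_sup_left]
    _ = H.index := relIndex_mul_index le_sup_left

/-- The set of subgroups of `G` of index `m`. For `m = 0` these are the subgroups of infinite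
index. -/
def subgroupsOfIndex (G : Type*) [AddGroup G] (m : ℕ) : Set (AddSubgroup G) :=
  {H | H.index = m}

section Recursion

variable {A G : Type*} [AddGroup A] [AddCommGroup G] {f : A →+ G} {p : G →+ ℤ}

theorem encard_subgroupsOfIndex_comap_eq_le (hfp : Exact f p) (hp : Surjective p) (m : ℕ)
    {K : AddSubgroup A} (hK : K.index ≠ 0) :
    {H ∈ subgroupsOfIndex G m | H.comap f = K}.encard ≤ K.index := by
  obtain ⟨x₀, hx₀⟩ := hp (m / K.index : ℕ)
  have : Finite (A ⧸ K) := Nat.finite_of_card_ne_zero hK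
  calc {H ∈ subgroupsOfIndex G m | H.comap f = K}.encard
      ≤ {H : AddSubgroup G | H.comap f = K ∧ H.map p = zmultiples (p x₀)}.encard := by
        refine Set.encard_le_encard ?_
        rintro H ⟨rfl, rfl⟩
        refine ⟨rfl, ?_⟩
        rw [hx₀, ← index_comap_mul_index_map hfp hp H, Nat.mul_div_cancel_left _ hK.pos]
        exact int_addSubgroup_eq_zmultiples_index _
    _ ≤ ENat.card (A ⧸ K) := encard_comap_eq_map_eq_zmultiples_le hfp K x₀
    _ = K.index := ENat.card_eq_coe_natCard _

theorem encard_subgroupsOfIndex_le_sum (hfp : Exact f p) (hp : Surjective p) {m : ℕ}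
    (hm : m ≠ 0) :
    (subgroupsOfIndex G m).encard ≤ ∑ d ∈ m.divisors, (subgroupsOfIndex A d).encard * d := by
  calc (subgroupsOfIndex G m).encard
      ≤ (⋃ d ∈ m.divisors, {H ∈ subgroupsOfIndex G m | (H.comap f).index = d}).encard := by
        refine Set.encard_le_encard fun H hH ↦ ?_
        have hdvd : (H.comap f).index ∣ m :=
          ⟨_, hH.symm.trans (index_comap_mul_index_map hfp hp H).symm⟩
        exact Set.mem_biUnion (Nat.mem_divisors.mpr ⟨hdvd, hm⟩) ⟨hH, rfl⟩
    _ ≤ ∑ d ∈ m.divisors, {H ∈ subgroupsOfIndex G m | (H.comap f).index = d}.encard :=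
        Finset.set_encard_biUnion_le _ _
    _ ≤ ∑ d ∈ m.divisors, (subgroupsOfIndex A d).encard * d := by
        refine Finset.sum_le_sum fun d hd ↦ ?_
        refine encard_le_encard_mul_of_encard_fiber_le (g := comap f) (fun H hH ↦ hH.2) ?_
        rintro K rfl
        have hK : K.index ≠ 0 := (Nat.pos_of_mem_divisors hd).ne'
        refine le_trans (Set.encard_le_encard ?_) (encard_subgroupsOfIndex_comap_eq_le hfp hp m hK)
        exact fun H hH ↦ ⟨hH.1.1, hH.2⟩

end Recursion

/-- The inclusion `Mⁿ → Mⁿ⁺¹` of the kernel of the first coordinate, `x ↦ (0, x)`. -/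
def consZeroHom (M : Type*) [AddZeroClass M] (n : ℕ) : (Fin n → M) →+ (Fin (n + 1) → M) where
  toFun x := Fin.cons 0 x
  map_zero' := Matrix.cons_zero_zero
  map_add' x y := by
    ext i
    cases i using Fin.cases <;> simp

theorem exact_consZeroHom_eval (M : Type*) [AddZeroClass M] (n : ℕ) :
    Exact (consZeroHom M n) (Pi.evalAddMonoidHom (fun _ : Fin (n + 1) ↦ M) 0) := by
  intro x
  constructor
  · intro (hx : x 0 = 0)
    have htail : Fin.cons 0 (Fin.tail x) = x := by rw [← hx, Fin.cons_self_tail]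
    exact ⟨Fin.tail x, htail⟩
  · rintro ⟨y, rfl⟩
    rfl

theorem encard_subgroupsOfIndex_fin_one_le (m : ℕ) :
    (subgroupsOfIndex (Fin 1 → ℤ) m).encard ≤ 1 := by
  let e : (Fin 1 → ℤ) ≃+ ℤ := AddEquiv.piUnique _
  refine Set.encard_le_one_iff.mpr fun H H' hH hH' ↦ ?_
  have hindex : (H.map (e : (Fin 1 → ℤ) →+ ℤ)).index = (H'.map (e : (Fin 1 → ℤ) →+ ℤ)).index := by
    rw [index_map_equiv, index_map_equiv, hH, hH']
  apply map_injective (f := (e : (Fin 1 → ℤ) →+ ℤ)) e.injective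
  rw [int_addSubgroup_eq_zmultiples_index (H.map _), hindex, ← int_addSubgroup_eq_zmultiples_index]

theorem encard_subgroupsOfIndex_fin_succ_le (n : ℕ) {m : ℕ} (hm : m ≠ 0) :
    (subgroupsOfIndex (Fin (n + 1) → ℤ) m).encard ≤ (m.divisors.card ^ n * m ^ n : ℕ) := by
  induction n generalizing m with
  | zero => simpa using encard_subgroupsOfIndex_fin_one_le m
  | succ n ih =>
    calc (subgroupsOfIndex (Fin (n + 2) → ℤ) m).encard
        ≤ ∑ d ∈ m.divisors, (subgroupsOfIndex (Fin (n + 1) → ℤ) d).encard * d :=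
          encard_subgroupsOfIndex_le_sum (exact_consZeroHom_eval ℤ (n + 1))
            (surjective_eval 0) hm
      _ ≤ ∑ d ∈ m.divisors, ((d.divisors.card ^ n * d ^ n : ℕ) : ℕ∞) * d :=
          Finset.sum_le_sum fun d hd ↦ by gcongr; exact ih (Nat.pos_of_mem_divisors hd).ne'
      _ ≤ (m.divisors.card ^ (n + 1) * m ^ (n + 1) : ℕ) :=
          mod_cast sum_divisors_card_pow_mul_pow_mul_le n m

/-- For `n, m ≥ 1` the set of additive subgroups of `ℤⁿ` of index `m`
is finite, of cardinality at most `τ(m)^(n-1) * m^(n-1)`. -/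
theorem stmt17 (n m : ℕ) (hn : 1 ≤ n) (hm : 1 ≤ m) :
    {H : AddSubgroup (Fin n → ℤ) | H.index = m}.Finite ∧
      {H : AddSubgroup (Fin n → ℤ) | H.index = m}.ncard ≤
        m.divisors.card ^ (n - 1) * m ^ (n - 1) := by
  obtain ⟨k, rfl⟩ := Nat.exists_eq_add_of_le' hn
  exact Set.encard_le_coe_iff_finite_ncard_le.mp
    (encard_subgroupsOfIndex_fin_succ_le k (Nat.one_le_iff_ne_zero.mp hm))
end
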